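/- Let w₁,…,w_{2r} ∈ g be linearly independent with span S, and let u₁,…,u_ℓ be a basis of the Killing-orthogonal complement S^⊥. Then there is a nonzero constant κ₁ such that Σ_{ν∈Π_r} B([w_{ν(1)},w_{ν(2)}],x)⋯B([w_{ν(2r-1)},w_{ν(2r)}],x) = κ₁·det(∂_{u_i} p_j)(x) for all x ∈ g, where p₁,…,p_ℓ are homogeneous generators of S(g)^G. -/

import Mathlib

open Module MvPolynomial

/-- The value at `x` of `Γ(w₁ ∧ ⋯ ∧ w_{2r})`, the sum over perfect matchings `ν` of
`{1, …, 2r}` of `∏ᵢ B([w_{ν(2i-1)}, w_{ν(2i)}], x)` (`B` the Killing form), written as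
the average over all of `Σ_{2r}` with signs (each matching class consists of `r! 2^r`
permutations, on which the signed summand is constant). -/
noncomputable def GammaVal {L : Type*} [LieRing L] [LieAlgebra ℂ L]
    [Module.Finite ℂ L] (r : ℕ) (w : Fin (2 * r) → L) (x : L) : ℂ :=
  (1 / ((Nat.factorial r : ℂ) * 2 ^ r)) *
    ∑ σ : Equiv.Perm (Fin (2 * r)), ((Equiv.Perm.sign σ : ℤ) : ℂ) *
      ∏ i : Fin r,
        killingForm ℂ L
          ⁅w (σ ⟨2 * i.1, by have := i.isLt; omega⟩),
            w (σ ⟨2 * i.1 + 1, by have := i.isLt; omega⟩)⁆ x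

/-- Directional derivative `∂_u P` of a polynomial `P` on `L` in the coordinates of a
basis `b`. -/
noncomputable def dirDeriv {L : Type*} [LieRing L] [LieAlgebra ℂ L] {n : ℕ}
    (b : Basis (Fin n) ℂ L) (u : L) (P : MvPolynomial (Fin n) ℂ) :
    MvPolynomial (Fin n) ℂ :=
  ∑ i, MvPolynomial.C (b.repr u i) * MvPolynomial.pderiv i P

/-- Infinitesimal invariance of a polynomial function on `L` under the adjoint action. -/
noncomputable def IsInvariantPoly {L : Type*} [LieRing L] [LieAlgebra ℂ L] {n : ℕ}
    (b : Basis (Fin n) ℂ L) (P : MvPolynomial (Fin n) ℂ) : Prop :=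
  ∀ x y : L, MvPolynomial.eval (fun i => b.repr x i) (dirDeriv b ⁅y, x⁆ P) = 0

/-! Fix `x`. Both `Γ w = ∏ B([w₁, w₂], x) ± ⋯` and the Jacobian `J w` of the linear functions
`B(wᵢ, ·)` followed by `p₁, …, p_ℓ` are alternating forms in `w`, and after identifying `L` with its
dual both vanish as soon as some `wᵢ` is the differential at `x` of some `pⱼ`; for `Γ` this is the
invariance `dpⱼ [y, x] = 0`. Such forms are proportional, so `J z * Γ w = J w * Γ z` as polynomials
in `x`.

No prime `f` divides all the `J w`. Otherwise the `dpⱼ` would be linearly dependent modulo `f`; a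
derivation of the residue field of `f` turns this dependence into a contradiction, because the
subring generated by the `pⱼ`, which is the ring of invariants, contains every divisor of its
nonzero elements. Hence `Γ w = c * J w` for one polynomial `c`.

Finally `c` is constant. `Γ w` has degree `r`. If `w` consists of root vectors for `r` pairwise
non-proportional roots and their negatives, then `Γ w` is nonzero at the regular points of the
Cartan subalgebra, while `J w` vanishes on its `r` root hyperplanes and so has degree at least
`r`. -/

namespace KostantPfaffian

section Derivations

variable {k σ τ E : Type*} [Field k] [Field E] [Algebra k E]

open scoped TensorProduct in
-- In characteristic zero `R → E` is formally smooth, so `E ⊗ Ω[R⁄k] → Ω[E⁄k]` is split injective.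
theorem exists_derivation_extending [CharZero k] [Algebra.EssFiniteType k E]
    (R : Subalgebra k E) (δ : Derivation k R E) :
    ∃ Δ : Derivation k E E, ∀ x : R, Δ x = δ x := by
  let F := FractionRing R
  let : Algebra F E := FractionRing.liftAlgebra R E
  have : IsScalarTower R F E := FractionRing.isScalarTower_liftAlgebra R E
  have : IsScalarTower k F E := IsScalarTower.of_algebraMap_eq' (by
    rw [IsScalarTower.algebraMap_eq k R F, ← RingHom.comp_assoc,
      ← IsScalarTower.algebraMap_eq R F E, ← IsScalarTower.algebraMap_eq k R E])
  have : Algebra.EssFiniteType F E := Algebra.EssFiniteType.of_comp k F E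
  have : CharZero F := charZero_of_injective_algebraMap (algebraMap k F).injective
  have : Algebra.FormallySmooth R F := Algebra.FormallySmooth.of_isLocalization (nonZeroDivisors R)
  have : Algebra.FormallySmooth R E := Algebra.FormallySmooth.comp R F E
  have hinj : Function.Injective (KaehlerDifferential.mapBaseChange k R E) := by
    rw [injective_iff_map_eq_zero]
    intro x hx
    obtain ⟨x, rfl⟩ := (Algebra.H1Cotangent.exact_δ_mapBaseChange k R E x).mp hx
    rw [Subsingleton.elim x 0, map_zero]
  obtain ⟨s, hs⟩ := LinearMap.exists_leftInverse_of_injective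
    (KaehlerDifferential.mapBaseChange k R E) (LinearMap.ker_eq_bot.mpr hinj)
  let l : E ⊗[R] Ω[R⁄k] →ₗ[E] E := TensorProduct.AlgebraTensorModule.lift
    ((LinearMap.lsmul E (Ω[R⁄k] →ₗ[R] E)).flip δ.liftKaehlerDifferential)
  refine ⟨(l.comp s).compDer (KaehlerDifferential.D k E), fun x => ?_⟩
  calc l (s (KaehlerDifferential.D k E x))
      = l (s (KaehlerDifferential.mapBaseChange k R E (1 ⊗ₜ KaehlerDifferential.D k R x))) := by
        rw [KaehlerDifferential.mapBaseChange_tmul, one_smul, KaehlerDifferential.map_D]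
        rfl
    _ = l (1 ⊗ₜ KaehlerDifferential.D k R x) := congrArg l (LinearMap.congr_fun hs _)
    _ = δ x := by simp [l]

theorem derivation_aeval {R A M : Type*} [CommSemiring R] [CommSemiring A] [Algebra R A]
    [AddCommMonoid M] [Module R M] [Module A M] [Fintype τ]
    (D : Derivation R A M) (q : τ → A) (G : MvPolynomial τ R) :
    D (aeval q G) = ∑ j, aeval q (pderiv j G) • D (q j) := by
  classical
  induction G using MvPolynomial.induction_on with
  | C a => simp
  | add P Q hP hQ => simp only [map_add, hP, hQ, add_smul, Finset.sum_add_distrib]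
  | mul_X P i hP =>
    simp only [map_mul, aeval_X, Derivation.leibniz, hP, smul_eq_mul, map_add, add_smul,
      Finset.sum_add_distrib, Finset.smul_sum, pderiv_X, mul_smul]
    congr 1
    rw [Finset.sum_eq_single_of_mem i (Finset.mem_univ i) fun j _ hj => by simp [hj.symm]]
    simp

theorem derivation_eq_sum_pderiv {R M : Type*} [CommSemiring R] [AddCommMonoid M] [Module R M]
    [Module (MvPolynomial τ R) M] [Fintype τ] (D : Derivation R (MvPolynomial τ R) M)
    (P : MvPolynomial τ R) : D P = ∑ j, pderiv j P • D (X j) := by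
  simpa only [aeval_X_left_apply] using derivation_aeval D X P

theorem exists_derivation_of_relations [CharZero k] [Algebra.EssFiniteType k E] [Fintype τ]
    (φ : MvPolynomial τ k →ₐ[k] E) (η : τ → E)
    (h : ∀ G, φ G = 0 → ∑ j, η j * φ (pderiv j G) = 0) :
    ∃ Δ : Derivation k E E, ∀ j, Δ (φ (X j)) = η j := by
  classical
  let : Algebra (MvPolynomial τ k) E := φ.toAlgebra
  have : IsScalarTower k (MvPolynomial τ k) E := IsScalarTower.of_algHom φ
  let d : Derivation k (MvPolynomial τ k) E := mkDerivation k η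
  have hd : ∀ G, φ G = 0 → d G = 0 := fun G hG => by
    rw [derivation_eq_sum_pderiv, ← h G hG]
    exact Finset.sum_congr rfl fun j _ => by
      rw [mkDerivation_X, mul_comm]; rfl
  obtain ⟨s, hs⟩ := φ.rangeRestrict.toLinearMap.exists_rightInverse_of_surjective
    (LinearMap.range_eq_top.mpr φ.rangeRestrict_surjective)
  have hs' : ∀ x : φ.range, φ (s x) = x := fun x =>
    congrArg Subtype.val (LinearMap.congr_fun hs x)
  have hds : ∀ G (x : φ.range), φ G = x → d (s x) = d G := fun G x hx =>
    sub_eq_zero.mp (by rw [← map_sub, hd _ (by rw [map_sub, hs', hx, sub_self])])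
  let δ : Derivation k φ.range E := Derivation.mk' (d.toLinearMap.comp s) fun x y => by
    have hxy := hds (s x * s y) (x * y) (by simp only [map_mul, hs', MulMemClass.coe_mul])
    have hsmul : ∀ (x : φ.range) (e : E), s x • e = x • e := fun x e =>
      congrArg (· * e) (hs' x)
    rwa [Derivation.leibniz, hsmul, hsmul] at hxy
  obtain ⟨Δ, hΔ⟩ := exists_derivation_extending φ.range δ
  refine ⟨Δ, fun j => ?_⟩
  calc Δ (φ (X j)) = d (s (φ.rangeRestrict (X j))) := hΔ (φ.rangeRestrict (X j))
    _ = d (X j) := hds _ _ rfl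
    _ = η j := mkDerivation_X _ _ _

theorem totalDegree_pderiv_le {R : Type*} [CommSemiring R] (i : σ) (P : MvPolynomial σ R) :
    (pderiv i P).totalDegree ≤ P.totalDegree - 1 := by
  refine Finset.sup_le fun m hm => ?_
  have hm' : coeff (m + Finsupp.single i 1) P ≠ 0 := fun h0 => by
    rw [MvPolynomial.mem_support_iff, coeff_pderiv, h0, zero_mul] at hm
    exact hm rfl
  have := le_totalDegree (MvPolynomial.mem_support_iff.mpr hm')
  rw [Finsupp.sum_add_index' (fun _ => rfl) (fun _ _ _ => rfl),
    Finsupp.sum_single_index rfl] at this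
  exact Nat.le_sub_one_of_lt this

theorem totalDegree_eq_zero_of_pderiv_eq_zero [CharZero k] {P : MvPolynomial σ k}
    (h : ∀ i, pderiv i P = 0) : P.totalDegree = 0 := by
  classical
  refine Nat.le_zero.mp (Finset.sup_le fun m hm => ?_)
  suffices hm0 : m = 0 by simp [hm0]
  by_contra hm0
  obtain ⟨i, hi⟩ := Finsupp.ne_iff.mp hm0
  have hle : Finsupp.single i 1 ≤ m := by
    simpa [Finsupp.single_le_iff] using Nat.one_le_iff_ne_zero.mpr hi
  have h1 := coeff_pderiv (i := i) P (m - Finsupp.single i 1)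
  rw [h i, coeff_zero, tsub_add_cancel_of_le hle] at h1
  exact (mul_eq_zero.mp h1.symm).elim (MvPolynomial.mem_support_iff.mp hm)
    (Nat.cast_add_one_ne_zero _)

theorem exists_not_dvd_pderiv [CharZero k] {P : MvPolynomial σ k} (hP : Prime P) :
    ∃ i, ¬ P ∣ pderiv i P := by
  by_contra! h
  have hdeg : P.totalDegree = 0 := totalDegree_eq_zero_of_pderiv_eq_zero fun i => by
    by_contra hi
    have hlt := totalDegree_pderiv_le i P
    have hle := totalDegree_le_of_dvd_of_isDomain (h i) hi
    have hzero : P.totalDegree = 0 := by omega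
    rw [totalDegree_eq_zero_iff_eq_C.mp hzero, pderiv_C] at hi
    exact hi rfl
  rw [totalDegree_eq_zero_iff_eq_C] at hdeg
  refine hP.not_isUnit (hdeg ▸ (isUnit_iff_ne_zero.mpr fun h0 => hP.ne_zero ?_).map C)
  rw [hdeg, h0, map_zero]

theorem dvd_derivation_of_dvd_constant {R : Type*} [CommRing R] [IsDomain R] [WfDvdMonoid R]
    [CharZero k] [Algebra k R] (D : Derivation k R R) {f h : R} (hf : Prime f) (hh : h ≠ 0)
    (hfh : f ∣ h) (hD : D h = 0) : f ∣ D f := by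
  obtain ⟨e, he, hfe⟩ := (FiniteMultiplicity.of_prime_left hf hh).exists_eq_pow_mul_and_not_dvd
  obtain ⟨m, hm⟩ : ∃ m, multiplicity f h = m + 1 := Nat.exists_eq_add_one.mpr
    (Nat.pos_of_ne_zero fun h0 => multiplicity_eq_zero.mp h0 hfh)
  rw [he, hm, Derivation.leibniz, Derivation.leibniz_pow] at hD
  simp only [smul_eq_mul, nsmul_eq_mul, Nat.add_sub_cancel] at hD
  have hcancel : f * D e + ((m + 1 : ℕ) : R) * (e * D f) = 0 :=
    (mul_eq_zero.mp (by linear_combination hD)).resolve_left (pow_ne_zero m hf.ne_zero)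
  have hdvd : f ∣ ((m + 1 : ℕ) : R) * (e * D f) :=
    ⟨-D e, by linear_combination hcancel⟩
  have hunit : IsUnit ((m + 1 : ℕ) : R) := by
    rw [← map_natCast (algebraMap k R)]
    exact (isUnit_iff_ne_zero.mpr (Nat.cast_ne_zero.mpr m.succ_ne_zero)).map _
  exact (hf.dvd_or_dvd (hunit.dvd_mul_left.mp hdvd)).resolve_left hfe

theorem sum_mul_eq_zero_of_relations [CharZero k] [Algebra.EssFiniteType k E] [Finite σ]
    [Fintype τ] (φ : MvPolynomial σ k →ₐ[k] E) (p : τ → MvPolynomial σ k) {g : τ → E}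
    (hg : ∀ i, ∑ j, g j * φ (pderiv i (p j)) = 0) {η : τ → E}
    (hη : ∀ G : MvPolynomial τ k, φ (aeval p G) = 0 → ∑ j, η j * φ (aeval p (pderiv j G)) = 0) :
    ∑ j, g j * η j = 0 := by
  have := Fintype.ofFinite σ
  obtain ⟨Δ, hΔ⟩ := exists_derivation_of_relations (φ.comp (aeval p)) η hη
  have hφ : ∀ P, φ P = aeval (fun i => φ (X i)) P := DFunLike.congr_fun (aeval_unique φ)
  have hη' : ∀ j, η j = ∑ i, φ (pderiv i (p j)) * Δ (φ (X i)) := fun j => by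
    rw [← hΔ j, AlgHom.comp_apply, aeval_X, hφ (p j), derivation_aeval]
    simp only [← hφ, smul_eq_mul]
  calc ∑ j, g j * η j
      = ∑ i, (∑ j, g j * φ (pderiv i (p j))) * Δ (φ (X i)) := by
        simp only [hη', Finset.mul_sum, Finset.sum_mul, ← mul_assoc]
        exact Finset.sum_comm
    _ = 0 := by simp only [hg, zero_mul, Finset.sum_const_zero]

-- Dual to `sum_mul_eq_zero_of_relations`.
theorem mem_span_relation_gradients [CharZero k] [Algebra.EssFiniteType k E] [Finite σ]
    [Fintype τ] (φ : MvPolynomial σ k →ₐ[k] E) (p : τ → MvPolynomial σ k) {g : τ → E}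
    (hg : ∀ i, ∑ j, g j * φ (pderiv i (p j)) = 0) :
    g ∈ Submodule.span E
      ((fun G j => φ (aeval p (pderiv j G))) '' {G : MvPolynomial τ k | φ (aeval p G) = 0}) := by
  classical
  by_contra hmem
  obtain ⟨l, hlg, hl⟩ := Submodule.exists_dual_map_eq_bot_of_notMem hmem inferInstance
  have hsum : ∀ v : τ → E, ∑ j, v j * l (Pi.single j 1) = l v := fun v => by
    simpa only [smul_eq_mul, ← Pi.single_apply, Pi.single_comm] using
      (LinearMap.pi_apply_eq_sum_univ l v).symm
  refine hlg ((hsum g).symm.trans (sum_mul_eq_zero_of_relations φ p hg fun G hG => ?_))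
  have hlG : l (fun j => φ (aeval p (pderiv j G))) = 0 := (Submodule.mem_bot E).mp
    (hl ▸ Submodule.mem_map_of_mem (Submodule.subset_span (Set.mem_image_of_mem _ hG)))
  rw [← hlG, ← hsum]
  exact Finset.sum_congr rfl fun j _ => mul_comm _ _

theorem exists_generator_of_prime_relations {p : τ → MvPolynomial σ k}
    (hp : AlgebraicIndependent k p)
    (hfact : ∀ f q, Prime f → q ≠ 0 → f * q ∈ Algebra.adjoin k (Set.range p) →
      f ∈ Algebra.adjoin k (Set.range p) ∧ q ∈ Algebra.adjoin k (Set.range p))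
    {f : MvPolynomial σ k} (hf : Prime f) :
    ∃ F : MvPolynomial τ k, (F = 0 ∨ aeval p F = f) ∧
      ∀ G : MvPolynomial τ k, f ∣ aeval p G → F ∣ G := by
  simp only [Algebra.adjoin_range_eq_range_aeval, AlgHom.mem_range] at hfact
  by_cases hrel : ∀ G : MvPolynomial τ k, f ∣ aeval p G → G = 0
  · exact ⟨0, Or.inl rfl, fun G hG => zero_dvd_iff.mpr (hrel G hG)⟩
  have hfactor : ∀ G : MvPolynomial τ k, G ≠ 0 → f ∣ aeval p G →
      ∃ F Q : MvPolynomial τ k, aeval p F = f ∧ aeval p G = f * aeval p Q := by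
    rintro G hG ⟨q, hq⟩
    have hq0 : q ≠ 0 := fun h0 => hG <| hp.eq_zero_of_aeval_eq_zero G <| by
      rw [hq, h0, mul_zero]
    obtain ⟨⟨F, hF⟩, Q, rfl⟩ := hfact f q hf hq0 ⟨G, hq⟩
    exact ⟨F, Q, hF, hq⟩
  push Not at hrel
  obtain ⟨G₀, hG₀, hne⟩ := hrel
  obtain ⟨F, -, hF, -⟩ := hfactor G₀ hne hG₀
  refine ⟨F, Or.inr hF, fun G hG => ?_⟩
  rcases eq_or_ne G 0 with rfl | hG0
  · exact dvd_zero F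
  obtain ⟨-, Q, -, hQ⟩ := hfactor G hG0 hG
  exact ⟨Q, hp (by rw [map_mul, hF, hQ])⟩

-- The relations between the classes of the `p j` modulo `f` are generated by a single `F`, so a
-- linear relation between their gradients is a multiple of the gradient of `F`.
theorem eq_zero_of_sum_mul_pderiv_eq_zero [CharZero k] [Algebra.EssFiniteType k E] [Finite σ]
    [Fintype τ] {p : τ → MvPolynomial σ k} (hp : AlgebraicIndependent k p)
    (hfact : ∀ f q, Prime f → q ≠ 0 → f * q ∈ Algebra.adjoin k (Set.range p) →
      f ∈ Algebra.adjoin k (Set.range p) ∧ q ∈ Algebra.adjoin k (Set.range p))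
    {f : MvPolynomial σ k} (hf : Prime f) {φ : MvPolynomial σ k →ₐ[k] E}
    (hφ : ∀ P, φ P = 0 ↔ f ∣ P) {g : τ → E}
    (hg : ∀ i, ∑ j, g j * φ (pderiv i (p j)) = 0) : g = 0 := by
  obtain ⟨F, hF, hdvd⟩ := exists_generator_of_prime_relations hp hfact hf
  have hφF : φ (aeval p F) = 0 := (hφ _).mpr <| by
    rcases hF with rfl | hF
    · simp
    · rw [hF]
  have hspan : g ∈ Submodule.span E {fun j => φ (aeval p (pderiv j F))} := by
    refine Submodule.span_le.mpr ?_ (mem_span_relation_gradients φ p hg)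
    rintro - ⟨G, hG, rfl⟩
    obtain ⟨Q, rfl⟩ := hdvd G ((hφ _).mp hG)
    refine Submodule.mem_span_singleton.mpr ⟨φ (aeval p Q), funext fun j => ?_⟩
    simp only [Pi.smul_apply, smul_eq_mul, Derivation.leibniz, map_add, map_mul, hφF, zero_mul,
      zero_add]
  obtain ⟨h, rfl⟩ := Submodule.mem_span_singleton.mp hspan
  rcases hF with rfl | rfl
  · ext j
    simp
  obtain ⟨i, hi⟩ := exists_not_dvd_pderiv hf
  have hgrad : h * φ (pderiv i (aeval p F)) = 0 := by
    rw [← hg i, derivation_aeval, map_sum, Finset.mul_sum]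
    simp only [Pi.smul_apply, smul_eq_mul, map_mul, mul_assoc]
  rw [(mul_eq_zero.mp hgrad).resolve_right (mt (hφ _).mp hi), zero_smul]

end Derivations

section PolynomialFunctions

variable {K V σ : Type*} [Field K] [AddCommGroup V] [Module K V] [Fintype σ] (b : Basis σ K V)

/-- A linear form on `V` as a polynomial in the coordinates of a basis. -/
noncomputable def linForm : Dual K V →ₗ[K] MvPolynomial σ K :=
  ∑ i, (Dual.eval K V (b i)).smulRight (X i)

theorem linForm_apply (φ : Dual K V) : linForm b φ = ∑ i, φ (b i) • X i := by
  simp only [linForm, LinearMap.sum_apply, LinearMap.smulRight_apply, Dual.eval_apply]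

theorem eval_linForm (φ : Dual K V) (x : V) : eval (b.repr x) (linForm b φ) = φ x := by
  conv_rhs => rw [← b.sum_repr x, map_sum]
  simp [linForm_apply, smul_eval, mul_comm]

theorem linForm_isHomogeneous (φ : Dual K V) : (linForm b φ).IsHomogeneous 1 := by
  rw [linForm_apply]
  exact IsHomogeneous.sum _ _ _ fun i _ => by
    simpa only [smul_eq_C_mul, zero_add] using (isHomogeneous_C σ _).mul (isHomogeneous_X K i)

theorem eq_of_forall_eval_repr_eq [Infinite K] {τ : Type*} [Finite τ] (b : Basis τ K V)
    {P Q : MvPolynomial τ K}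
    (h : ∀ x : V, eval (b.repr x) P = eval (b.repr x) Q) : P = Q :=
  MvPolynomial.funext fun v => by
    have hv : ⇑(b.repr (b.equivFun.symm v)) = v := b.equivFun.apply_symm_apply v
    simpa only [hv] using h (b.equivFun.symm v)

/-- The derivation `∂_u` of the polynomial functions on `V` in the direction `u`. -/
noncomputable def dirDerivation :
    V →ₗ[K] Derivation K (MvPolynomial σ K) (MvPolynomial σ K) where
  toFun u := mkDerivation K fun i => C (b.repr u i)
  map_add' u v := derivation_ext fun i => by
    simp only [mkDerivation_X, Derivation.add_apply, map_add, Finsupp.add_apply]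
  map_smul' c u := derivation_ext fun i => by
    simp only [mkDerivation_X, Derivation.smul_apply, map_smul, Finsupp.smul_apply, smul_eq_C_mul,
      smul_eq_mul, map_mul, RingHom.id_apply]

theorem dirDerivation_X {τ : Type*} (b : Basis τ K V) (u : V) (i : τ) :
    dirDerivation b u (X i) = C (b.repr u i) :=
  mkDerivation_X _ _ _

theorem dirDerivation_apply (u : V) (P : MvPolynomial σ K) :
    dirDerivation b u P = ∑ i, C (b.repr u i) * pderiv i P := by
  rw [derivation_eq_sum_pderiv]
  simp only [dirDerivation_X, smul_eq_mul, mul_comm]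

theorem dirDerivation_linForm (u : V) (φ : Dual K V) :
    dirDerivation b u (linForm b φ) = C (φ u) := by
  conv_rhs => rw [← b.sum_repr u, map_sum]
  simp [linForm_apply, dirDerivation_X, smul_eq_C_mul, mul_comm]

/-- The derivation of the polynomial functions on `V` given by the linear vector field `f`, that is
`P ↦ (x ↦ dP_x (f x))`. -/
noncomputable def linDerivation :
    End K V →ₗ[K] Derivation K (MvPolynomial σ K) (MvPolynomial σ K) where
  toFun f := mkDerivation K fun i => linForm b (b.coord i ∘ₗ f)
  map_add' f g := derivation_ext fun i => by
    simp only [mkDerivation_X, Derivation.add_apply, LinearMap.comp_add, map_add]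
  map_smul' c f := derivation_ext fun i => by
    simp only [mkDerivation_X, Derivation.smul_apply, LinearMap.comp_smul, map_smul,
      RingHom.id_apply]

theorem linDerivation_X (f : End K V) (i : σ) :
    linDerivation b f (X i) = linForm b (b.coord i ∘ₗ f) :=
  mkDerivation_X _ _ _

theorem eval_linDerivation (f : End K V) (x : V) (P : MvPolynomial σ K) :
    eval (b.repr x) (linDerivation b f P) = eval (b.repr x) (dirDerivation b (f x) P) := by
  rw [derivation_eq_sum_pderiv, dirDerivation_apply]
  simp only [linDerivation_X, smul_eq_mul, map_sum, map_mul, eval_linForm, eval_C,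
    LinearMap.comp_apply, Basis.coord_apply, mul_comm]

theorem linDerivation_linForm (f : End K V) (φ : Dual K V) :
    linDerivation b f (linForm b φ) = linForm b (φ ∘ₗ f) := by
  have hφ : φ ∘ₗ f = ∑ i, φ (b i) • (b.coord i ∘ₗ f) := LinearMap.ext fun x => by
    conv_lhs => rw [LinearMap.comp_apply, ← b.sum_repr (f x), map_sum]
    simp [mul_comm]
  simp only [hφ, linForm_apply b φ, map_sum, map_smul, Derivation.map_smul, linDerivation_X]

theorem linDerivation_lie (f g : End K V) :
    linDerivation b ⁅f, g⁆ = ⁅linDerivation b g, linDerivation b f⁆ :=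
  derivation_ext fun i => by
    rw [Derivation.commutator_apply]
    simp only [linDerivation_X, linDerivation_linForm, ← map_sub, LinearMap.comp_assoc,
      ← LinearMap.comp_sub]
    rfl

theorem lie_dirDerivation_linDerivation (u : V) (f : End K V) :
    ⁅dirDerivation b u, linDerivation b f⁆ = dirDerivation b (f u) :=
  derivation_ext fun i => by
    rw [Derivation.commutator_apply, linDerivation_X, dirDerivation_linForm]
    simp only [dirDerivation_X, derivation_C, sub_zero, LinearMap.comp_apply,
      Basis.coord_apply]

theorem totalDegree_linDerivation_le (f : End K V) (P : MvPolynomial σ K) :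
    (linDerivation b f P).totalDegree ≤ P.totalDegree := by
  by_cases hP : P.totalDegree = 0
  · rw [totalDegree_eq_zero_iff_eq_C.mp hP, derivation_C, totalDegree_zero]
    exact Nat.zero_le _
  rw [derivation_eq_sum_pderiv]
  refine totalDegree_finsetSum_le fun i _ => (totalDegree_mul _ _).trans ?_
  have hpderiv := totalDegree_pderiv_le i P
  have hlin : (linDerivation b f (X i)).totalDegree ≤ 1 := by
    rw [linDerivation_X]
    exact (linForm_isHomogeneous b _).totalDegree_le
  omega

theorem exists_linDerivation_eq_smul {f : End K V} {P : MvPolynomial σ K}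
    (h : P ∣ linDerivation b f P) : ∃ c : K, linDerivation b f P = c • P := by
  obtain ⟨q, hq⟩ := h
  rcases eq_or_ne P 0 with rfl | hP0
  · exact ⟨0, by simp⟩
  rcases eq_or_ne q 0 with rfl | hq0
  · exact ⟨0, by simpa using hq⟩
  have hdeg := totalDegree_linDerivation_le b f P
  rw [hq, totalDegree_mul_of_isDomain hP0 hq0] at hdeg
  refine ⟨coeff 0 q, ?_⟩
  rw [hq, smul_eq_C_mul, mul_comm,
    ← totalDegree_eq_zero_iff_eq_C.mp (show q.totalDegree = 0 by omega)]

end PolynomialFunctions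

section Invariants

variable {K L σ : Type*} [Field K] [LieRing L] [LieAlgebra K L] [Fintype σ] (b : Basis σ K L)

/-- The ring of polynomial functions on `L` that are invariant under the adjoint action, which is
expressed infinitesimally. -/
noncomputable def invariants : Subalgebra K (MvPolynomial σ K) where
  carrier := {P | ∀ y, linDerivation b (LieAlgebra.ad K L y) P = 0}
  mul_mem' hP hQ y := by simp [hP y, hQ y]
  add_mem' hP hQ y := by rw [map_add, hP y, hQ y, add_zero]
  algebraMap_mem' c y := Derivation.map_algebraMap _ c

theorem mem_invariants {P : MvPolynomial σ K} :
    P ∈ invariants b ↔ ∀ y, linDerivation b (LieAlgebra.ad K L y) P = 0 :=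
  Iff.rfl

variable {b} in
theorem eval_dirDerivation_lie_eq_zero {P : MvPolynomial σ K} (hP : P ∈ invariants b) (x y : L) :
    eval (b.repr x) (dirDerivation b ⁅y, x⁆ P) = 0 := by
  rw [← LieAlgebra.ad_apply K, ← eval_linDerivation, hP y, map_zero]

variable {b} in
-- Differentiate `dP_x ⁅y, x⁆ = 0` in the direction `z`.
theorem eval_dirDerivation_lie_eq_zero_of_lie_eq_zero {P : MvPolynomial σ K}
    (hP : P ∈ invariants b) {x y : L} (hyx : ⁅y, x⁆ = 0) (z : L) :
    eval (b.repr x) (dirDerivation b ⁅y, z⁆ P) = 0 := by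
  rw [← LieAlgebra.ad_apply K, ← lie_dirDerivation_linDerivation, Derivation.commutator_apply,
    hP y, map_zero, zero_sub, map_neg, eval_linDerivation, LieAlgebra.ad_apply, hyx,
    dirDerivation_apply]
  simp

theorem eq_top_of_forall_lie_mem [FiniteDimensional K L] [LieAlgebra.IsKilling K L]
    (S : Submodule K L) (h : ∀ y z : L, ⁅y, z⁆ ∈ S) : S = ⊤ := by
  have hnd := LieAlgebra.IsKilling.killingForm_nondegenerate K L
  by_contra hS
  obtain ⟨φ, hφ, hφS⟩ := Submodule.exists_le_ker_of_lt_top S (lt_top_iff_ne_top.mpr hS)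
  obtain ⟨x, rfl⟩ := (LinearMap.BilinForm.toDual _ hnd).surjective φ
  have hcentral : x ∈ LieAlgebra.center K L := fun y => by
    rw [← lie_skew, neg_eq_zero]
    exact hnd.1 _ fun z => (LieModule.traceForm_apply_lie_apply K L L x y z).trans (hφS (h y z))
  rw [LieAlgebra.center_eq_bot, LieSubmodule.mem_bot] at hcentral
  exact hφ (by rw [hcentral, map_zero])

-- `ad y` acts on such a polynomial by a scalar, so commutators act by zero.
theorem mem_invariants_of_forall_dvd [FiniteDimensional K L] [LieAlgebra.IsKilling K L]
    {f : MvPolynomial σ K} (h : ∀ y, f ∣ linDerivation b (LieAlgebra.ad K L y) f) :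
    f ∈ invariants b := by
  choose c hc using fun y => exists_linDerivation_eq_smul b (h y)
  let A : L →ₗ[K] Derivation K (MvPolynomial σ K) (MvPolynomial σ K) :=
    linDerivation b ∘ₗ (LieAlgebra.ad K L : L →ₗ[K] End K L)
  let S : Submodule K L :=
    { carrier := {y | A y f = 0}
      add_mem' := fun {y z} (hy : A y f = 0) (hz : A z f = 0) => show A (y + z) f = 0 by
        rw [map_add, Derivation.add_apply, hy, hz, add_zero]
      zero_mem' := show A 0 f = 0 by rw [map_zero, Derivation.zero_apply]
      smul_mem' := fun a y (hy : A y f = 0) => show A (a • y) f = 0 by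
        rw [map_smul, Derivation.smul_apply, hy, smul_zero] }
  have hS : S = ⊤ := eq_top_of_forall_lie_mem S fun y z => by
    change linDerivation b (LieAlgebra.ad K L ⁅y, z⁆) f = 0
    have had : LieAlgebra.ad K L ⁅y, z⁆ = ⁅LieAlgebra.ad K L y, LieAlgebra.ad K L z⁆ :=
      LinearMap.ext fun x => lie_lie y z x
    rw [had, linDerivation_lie, Derivation.commutator_apply, hc, hc,
      Derivation.map_smul, Derivation.map_smul, hc, hc, smul_comm, sub_self]
  exact fun y => (hS ▸ Submodule.mem_top : y ∈ S)

theorem mem_invariants_of_prime_mul_mem [CharZero K] [FiniteDimensional K L]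
    [LieAlgebra.IsKilling K L] {f q : MvPolynomial σ K} (hf : Prime f) (hq : q ≠ 0)
    (hfq : f * q ∈ invariants b) : f ∈ invariants b ∧ q ∈ invariants b := by
  have hf_inv : f ∈ invariants b := mem_invariants_of_forall_dvd b fun y =>
    dvd_derivation_of_dvd_constant _ hf (mul_ne_zero hf.ne_zero hq) (dvd_mul_right f q) (hfq y)
  refine ⟨hf_inv, fun y => ?_⟩
  have hmul := hfq y
  rw [Derivation.leibniz, hf_inv y, smul_zero, add_zero, smul_eq_mul] at hmul
  exact (mul_eq_zero.mp hmul).resolve_left hf.ne_zero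

end Invariants

section Alternating

variable {R M N ι κ : Type*} [CommRing R] [AddCommGroup M] [Module R M] [AddCommGroup N]
  [Module R N]

/-- The alternating map `a ↦ f (a, v)` obtained by fixing some of the arguments of `f`. -/
def sumElimRight (f : M [⋀^ι ⊕ κ]→ₗ[R] N) (v : κ → M) : M [⋀^ι]→ₗ[R] N where
  toFun a := f (Sum.elim a v)
  map_update_add' a i x y := by
    classical simp only [Sum.elim_update_left, AlternatingMap.map_update_add]
  map_update_smul' a i c x := by
    classical simp only [Sum.elim_update_left, AlternatingMap.map_update_smul]
  map_eq_zero_of_eq' a i j h hij :=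
    f.map_eq_zero_of_eq _ (i := Sum.inl i) (j := Sum.inl j) h (Sum.inl_injective.ne hij)

theorem sumElimRight_apply (f : M [⋀^ι ⊕ κ]→ₗ[R] N) (v : κ → M) (a : ι → M) :
    sumElimRight f v a = f (Sum.elim a v) :=
  rfl

theorem sumElimRight_eq_zero (f : M [⋀^ι ⊕ κ]→ₗ[R] N) {v : κ → M} {a : ι → M} {i : ι} {j : κ}
    (h : a i = v j) : sumElimRight f v a = 0 :=
  f.map_eq_zero_of_eq _ (i := Sum.inl i) (j := Sum.inr j) h Sum.inl_ne_inr

theorem alternating_smul_eq_smul [Finite ι] (B : Basis (ι ⊕ κ) R M) {f g : M [⋀^ι]→ₗ[R] R}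
    (hf : ∀ a i j, a i = B (Sum.inr j) → f a = 0) (hg : ∀ a i j, a i = B (Sum.inr j) → g a = 0) :
    f (B ∘ Sum.inl) • g = g (B ∘ Sum.inl) • f := by
  have := Fintype.ofFinite ι
  classical
  refine Basis.ext_alternating B fun v hv => ?_
  by_cases hr : ∃ i j, v i = Sum.inr j
  · obtain ⟨i, j, hij⟩ := hr
    rw [AlternatingMap.smul_apply, AlternatingMap.smul_apply,
      hf (fun i => B (v i)) i j (congrArg B hij), hg (fun i => B (v i)) i j (congrArg B hij),
      smul_zero, smul_zero]
  push Not at hr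
  have hinl : ∀ i, ∃ k, Sum.inl k = v i := fun i => by
    cases h : v i with
    | inl k => exact ⟨k, rfl⟩
    | inr j => exact absurd h (hr i j)
  choose t ht using hinl
  have ht_inj : Function.Injective t := fun i j hij => hv (by rw [← ht, ← ht, hij])
  let π : Equiv.Perm ι := Equiv.ofBijective t (Finite.injective_iff_bijective.mp ht_inj)
  have hπ : (fun i => B (v i)) = (B ∘ Sum.inl) ∘ π := funext fun i => congrArg B (ht i).symm
  rw [hπ, AlternatingMap.smul_apply, AlternatingMap.smul_apply, AlternatingMap.map_perm,
    AlternatingMap.map_perm, smul_comm, smul_eq_mul, mul_comm, ← smul_eq_mul, smul_comm]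

end Alternating

section LinearAlgebra

variable {K V ι κ τ : Type*} [Field K] [AddCommGroup V] [Module K V] [Fintype ι] [Fintype κ]

theorem exists_linearIndependent_sumElim_basis [FiniteDimensional K V] (c : Basis τ K V) {u : κ → V}
    (hu : LinearIndependent K u) (hcard : finrank K V = Fintype.card ι + Fintype.card κ) :
    ∃ v : ι → τ, LinearIndependent K (Sum.elim (c ∘ v) u) := by
  let S := Submodule.span K (Set.range u)
  obtain ⟨τ', a, -, hspan, hindep⟩ := exists_linearIndependent' K (S.mkQ ∘ c)
  have hspan_top : Submodule.span K (Set.range ((S.mkQ ∘ c) ∘ a)) = ⊤ := by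
    rw [hspan, Set.range_comp, ← Submodule.map_span, c.span_eq, Submodule.map_top,
      Submodule.range_mkQ]
  have hrank := S.finrank_quotient_add_finrank
  rw [finrank_span_eq_card hu, hcard, Nat.add_right_cancel_iff] at hrank
  let B := Basis.mk hindep hspan_top.ge
  let e : ι ≃ τ' := (Fintype.equivFinOfCardEq hrank.symm).trans ((finBasis K _).indexEquiv B)
  refine ⟨a ∘ e, ?_⟩
  have hsum := (linearIndependent_span hu).sumElim_of_quotient (c ∘ a ∘ e)
    (hindep.comp e e.injective)
  have hswap := hsum.comp _ (Equiv.sumComm ι κ).injective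
  rwa [Equiv.sumComm_apply, Sum.elim_swap] at hswap

theorem det_sumElim_mul_eq [DecidableEq ι] [DecidableEq κ] (d : Basis (ι ⊕ κ) K V) (v : κ → V)
    {g : V [⋀^ι]→ₗ[K] K} (hg : ∀ a i j, a i = v j → g a = 0) (z a : ι → V) :
    d.det (Sum.elim z v) * g a = d.det (Sum.elim a v) * g z := by
  wlog hz : d.det (Sum.elim z v) ≠ 0 generalizing z a
  · by_cases ha : d.det (Sum.elim a v) = 0
    · rw [not_not.mp hz, ha, zero_mul, zero_mul]
    · exact (this a z ha).symm
  obtain ⟨hindep, hspan⟩ := d.is_basis_iff_det.mpr (isUnit_iff_ne_zero.mpr hz)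
  let B := Basis.mk hindep hspan.ge
  have hB : ⇑B = Sum.elim z v := Basis.coe_mk _ _
  have hdet_zero : ∀ a i j, a i = B (Sum.inr j) → sumElimRight d.det v a = 0 := fun a i j h =>
    sumElimRight_eq_zero d.det (h.trans (congrFun hB _))
  have hg_zero : ∀ a i j, a i = B (Sum.inr j) → g a = 0 := fun a i j h =>
    hg a i j (h.trans (congrFun hB _))
  have hsmul := congrArg (· a) (alternating_smul_eq_smul B hdet_zero hg_zero)
  simpa only [AlternatingMap.smul_apply, smul_eq_mul, hB, Sum.elim_comp_inl, sumElimRight_apply,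
    mul_comm (g z)] using hsmul

omit [Fintype κ] in
theorem det_dual_apply_ne_zero [DecidableEq ι] (d : Basis (ι ⊕ κ) K V) {ψ : ι → Dual K V}
    (hψ : LinearIndependent K ψ) (hψd : ∀ i j, ψ i (d (Sum.inr j)) = 0) :
    (Matrix.of fun i s => ψ i (d (Sum.inl s))).det ≠ 0 := fun hdet => by
  obtain ⟨c, hc, hc_mul⟩ := Matrix.exists_vecMul_eq_zero_iff.mpr hdet
  refine hc (funext (Fintype.linearIndependent_iff.mp hψ c (d.ext fun k => ?_)))
  rcases k with s | j
  · simpa [Matrix.vecMul, dotProduct] using congrFun hc_mul s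
  · simp [hψd]

end LinearAlgebra

section Jacobian

variable {K V σ : Type*} [Field K] [AddCommGroup V] [Module K V] (b : Basis σ K V)

/-- The differential at `x` of the polynomial function `P` on `V`. -/
noncomputable def differential (x : V) (P : MvPolynomial σ K) : Dual K V where
  toFun u := eval (b.repr x) (dirDerivation b u P)
  map_add' u v := by rw [map_add, Derivation.add_apply, map_add]
  map_smul' c u := by
    rw [map_smul, Derivation.smul_apply, smul_eval, RingHom.id_apply, smul_eq_mul]

theorem differential_apply (x u : V) (P : MvPolynomial σ K) :
    differential b x P u = eval (b.repr x) (dirDerivation b u P) :=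
  rfl

theorem differential_linForm [Fintype σ] (x : V) (φ : Dual K V) :
    differential b x (linForm b φ) = φ :=
  LinearMap.ext fun u => by rw [differential_apply, dirDerivation_linForm, eval_C]

theorem dirDerivation_basis (i : σ) (P : MvPolynomial σ K) :
    dirDerivation b (b i) P = pderiv i P := by
  classical
  suffices h : dirDerivation b (b i) = pderiv i from congrArg (· P) h
  refine derivation_ext fun k => ?_
  rw [dirDerivation_X, b.repr_self, pderiv_X, Finsupp.single_apply, Pi.single_apply]
  split_ifs <;> simp_all

theorem dirDerivation_eq_sum {τ : Type*} [Fintype τ] (d : Basis τ K V) (u : V)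
    (P : MvPolynomial σ K) :
    dirDerivation b u P = ∑ m, d.repr u m • dirDerivation b (d m) P := by
  conv_lhs => rw [← d.sum_repr u, map_sum, ← Derivation.coeFnAddMonoidHom_apply, map_sum]
  simp

section Determinant

variable {τ : Type*} [Fintype τ] [DecidableEq τ] (d : Basis τ K V)

/-- The Jacobian determinant of the polynomial functions `q` in the directions given by the
basis `d`. -/
noncomputable def jacobian (q : τ → MvPolynomial σ K) : MvPolynomial σ K :=
  (Matrix.of fun k m => dirDerivation b (d m) (q k)).det

theorem eval_jacobian (q : τ → MvPolynomial σ K) (x : V) :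
    eval (b.repr x) (jacobian b d q) = d.dualBasis.det fun k => differential b x (q k) := by
  rw [jacobian, RingHom.map_det, Basis.det_apply, ← Matrix.det_transpose]
  congr 1
  ext m k
  rw [Basis.toMatrix_apply, Basis.dualBasis_repr]
  rfl

theorem eval_jacobian_eq_zero {q : τ → MvPolynomial σ K} {x u : V} (hu : u ≠ 0)
    (h : ∀ k, differential b x (q k) u = 0) : eval (b.repr x) (jacobian b d q) = 0 := by
  rw [eval_jacobian]
  by_contra hdet
  obtain ⟨-, hspan⟩ := d.dualBasis.is_basis_iff_det.mpr (isUnit_iff_ne_zero.mpr hdet)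
  have hker : ⊤ ≤ LinearMap.ker (Dual.eval K V u) := by
    rw [← hspan, Submodule.span_le]
    rintro - ⟨k, rfl⟩
    exact h k
  exact hu ((forall_dual_apply_eq_zero_iff K u).mp fun φ => hker (Submodule.mem_top (x := φ)))

end Determinant

theorem linearIndependent_dirDerivation_mod_prime [Finite σ] {κ τ E : Type*} [Finite κ] [Finite τ]
    [CharZero K] [Field E] [Algebra K E] [Algebra.EssFiniteType K E] (d : Basis τ K V)
    {p : κ → MvPolynomial σ K} (hp : AlgebraicIndependent K p)
    (hfact : ∀ f q, Prime f → q ≠ 0 → f * q ∈ Algebra.adjoin K (Set.range p) →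
      f ∈ Algebra.adjoin K (Set.range p) ∧ q ∈ Algebra.adjoin K (Set.range p))
    {f : MvPolynomial σ K} (hf : Prime f) {φ : MvPolynomial σ K →ₐ[K] E}
    (hφ : ∀ P, φ P = 0 ↔ f ∣ P) :
    LinearIndependent E fun j m => φ (dirDerivation b (d m) (p j)) := by
  have := Fintype.ofFinite κ
  have := Fintype.ofFinite τ
  rw [Fintype.linearIndependent_iff]
  intro g hg
  have hg_apply : ∀ m, ∑ j, g j * φ (dirDerivation b (d m) (p j)) = 0 := fun m => by
    simpa only [Finset.sum_apply, Pi.smul_apply, smul_eq_mul, Pi.zero_apply] using congrFun hg m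
  refine congrFun (eq_zero_of_sum_mul_pderiv_eq_zero hp hfact hf hφ fun i => ?_)
  have hpderiv : ∀ j, φ (pderiv i (p j)) =
      ∑ m, d.repr (b i) m • φ (dirDerivation b (d m) (p j)) := fun j => by
    rw [← dirDerivation_basis b, dirDerivation_eq_sum b d, map_sum]
    simp only [map_smul]
  simp_rw [hpderiv, Finset.mul_sum, mul_smul_comm]
  rw [Finset.sum_comm]
  simp only [← Finset.smul_sum, hg_apply, smul_zero, Finset.sum_const_zero]

variable [Fintype σ] {ι κ : Type*} [Fintype ι] [Fintype κ] [DecidableEq ι] [DecidableEq κ]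
  (d : Basis (ι ⊕ κ) K V)

theorem exists_not_dvd_jacobian [CharZero K] {p : κ → MvPolynomial σ K}
    (hp : AlgebraicIndependent K p)
    (hfact : ∀ f q, Prime f → q ≠ 0 → f * q ∈ Algebra.adjoin K (Set.range p) →
      f ∈ Algebra.adjoin K (Set.range p) ∧ q ∈ Algebra.adjoin K (Set.range p))
    {f : MvPolynomial σ K} (hf : Prime f) :
    ∃ ψ : ι → Dual K V, ¬ f ∣ jacobian b d (Sum.elim (fun i => linForm b (ψ i)) p) := by
  have := (Ideal.span_singleton_prime hf.ne_zero).mpr hf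
  let E := (Ideal.span {f}).ResidueField
  have : Algebra.EssFiniteType K E := Algebra.EssFiniteType.comp K (MvPolynomial σ K) E
  let φ : MvPolynomial σ K →ₐ[K] E := IsScalarTower.toAlgHom K (MvPolynomial σ K) E
  have hφ : ∀ P, φ P = 0 ↔ f ∣ P := fun P =>
    Ideal.algebraMap_residueField_eq_zero.trans Ideal.mem_span_singleton
  obtain ⟨v, hv⟩ := exists_linearIndependent_sumElim_basis (ι := ι) (Pi.basisFun E (ι ⊕ κ))
    (linearIndependent_dirDerivation_mod_prime b d hp hfact hf hφ)
    (by rw [finrank_fintype_fun_eq_card, Fintype.card_sum])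
  refine ⟨fun i => d.coord (v i), fun hdvd => ?_⟩
  have hunit := (Matrix.isUnit_iff_isUnit_det _).mp
    (Matrix.linearIndependent_rows_iff_isUnit (A := Matrix.of _).mp hv)
  refine hunit.ne_zero ?_
  rw [← (hφ _).mpr hdvd, jacobian, AlgHom.map_det]
  congr 1
  ext1 (i | j) m
  · simp [dirDerivation_linForm, Finsupp.single_apply, Pi.single_apply]
  · simp

theorem jacobian_sumElim_linForm (p : κ → MvPolynomial σ K) {ψ : ι → Dual K V}
    (hψ : ∀ i j, ψ i (d (Sum.inr j)) = 0) :
    jacobian b d (Sum.elim (fun i => linForm b (ψ i)) p) =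
      C (Matrix.of fun i s => ψ i (d (Sum.inl s))).det *
        (Matrix.of fun i j => dirDerivation b (d (Sum.inr i)) (p j)).det := by
  rw [RingHom.map_det, ← Matrix.det_transpose (Matrix.of fun i j => _),
    ← Matrix.det_fromBlocks_zero₁₂ _
      (Matrix.of fun j s => dirDerivation b (d (Sum.inl s)) (p j)), jacobian]
  congr 1
  ext1 (i | j) (s | t) <;> simp [dirDerivation_linForm, hψ]

end Jacobian

section Pfaffian

variable {K V A ι : Type*} [CommRing K] [AddCommGroup V] [Module K V] [CommRing A] [Algebra K A]
  [Fintype ι] (B : V →ₗ[K] V →ₗ[K] A)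

/-- The multilinear map sending a family of pairs of vectors to the product of the values of the
bilinear map `B` on these pairs. -/
def pairProduct : MultilinearMap K (fun _ : ι × Fin 2 => V) A :=
  ((MultilinearMap.mkPiAlgebra K ι A).compMultilinearMap fun _ =>
    LinearMap.uncurryLeft (n := 1) (M := fun _ => V)
      ((MultilinearMap.ofSubsingletonₗ K K V A 0).toLinearMap ∘ₗ B)).domDomCongr
    (Equiv.sigmaEquivProd ι (Fin 2))

variable [DecidableEq ι]

/-- The signed sum over all arrangements into pairs of the products of the values of `B` on the
pairs. For skew-symmetric `B` and `r = card ι` each perfect matching is counted `r! * 2 ^ r` times,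
so this is `r! * 2 ^ r` times the Pfaffian. -/
def pfaffianForm : V [⋀^ι × Fin 2]→ₗ[K] A :=
  MultilinearMap.alternatization (pairProduct B)

theorem pfaffianForm_apply (w : ι × Fin 2 → V) :
    pfaffianForm B w = ∑ π : Equiv.Perm (ι × Fin 2),
      Equiv.Perm.sign π • ∏ i, B (w (π (i, 0))) (w (π (i, 1))) :=
  MultilinearMap.alternatization_apply _ _

theorem pfaffianForm_eq_zero {w : ι × Fin 2 → V} {k : ι × Fin 2}
    (hleft : ∀ v, B (w k) v = 0) (hright : ∀ v, B v (w k) = 0) : pfaffianForm B w = 0 := by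
  rw [pfaffianForm_apply]
  refine Finset.sum_eq_zero fun π _ => ?_
  rw [Finset.prod_eq_zero (Finset.mem_univ (π.symm k).1), smul_zero]
  obtain ⟨⟨i, l⟩, rfl⟩ := π.surjective k
  rw [Equiv.symm_apply_apply]
  fin_cases l
  · exact hleft _
  · exact hright _

theorem map_pfaffianForm {A' : Type*} [CommRing A'] [Algebra K A'] (φ : A →ₐ[K] A')
    (w : ι × Fin 2 → V) :
    φ (pfaffianForm B w) = pfaffianForm (B.compr₂ φ.toLinearMap) w := by
  simp only [pfaffianForm_apply, map_sum, map_prod, Units.smul_def, map_zsmul,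
    LinearMap.compr₂_apply, AlgHom.toLinearMap_apply]

theorem pfaffianForm_isHomogeneous {σ : Type*} {B : V →ₗ[K] V →ₗ[K] MvPolynomial σ K}
    (hB : ∀ u v, (B u v).IsHomogeneous 1) (w : ι × Fin 2 → V) :
    (pfaffianForm B w).IsHomogeneous (Fintype.card ι) := by
  rw [pfaffianForm_apply]
  refine Submodule.sum_mem (homogeneousSubmodule σ K _) fun π _ => ?_
  rw [Units.smul_def]
  refine zsmul_mem ?_ _
  simpa using IsHomogeneous.prod Finset.univ _ (fun _ => 1) fun i _ =>
    hB (w (π (i, 0))) (w (π (i, 1)))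

omit [Fintype ι] [DecidableEq ι] in
theorem exists_eq_prodCongrLeft_mul_prodCongrRight [Finite ι] {π : Equiv.Perm (ι × Fin 2)}
    (hπ : ∀ i, (π (i, 0)).1 = (π (i, 1)).1) :
    ∃ (ρ : Equiv.Perm ι) (s : ι → Equiv.Perm (Fin 2)),
      π = Equiv.prodCongrLeft (fun _ => ρ) * Equiv.prodCongrRight s := by
  have hfst : ∀ i k, (π (i, k)).1 = (π (i, 0)).1 := fun i k => by
    fin_cases k
    · rfl
    · exact (hπ i).symm
  have hs_inj : ∀ i, Function.Injective fun k => (π (i, k)).2 := fun i k l hkl =>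
    congrArg Prod.snd (π.injective (Prod.ext ((hfst i k).trans (hfst i l).symm) hkl))
  let s (i : ι) := Equiv.ofBijective _ (Finite.injective_iff_bijective.mp (hs_inj i))
  have hρ_inj : Function.Injective fun i => (π (i, 0)).1 := fun i j hij => by
    have hπij : π (j, (s j).symm (s i 0)) = π (i, 0) :=
      Prod.ext ((hfst j _).trans hij.symm) ((s j).apply_symm_apply _)
    exact (congrArg Prod.fst (π.injective hπij)).symm
  exact ⟨Equiv.ofBijective _ (Finite.injective_iff_bijective.mp hρ_inj), s,
    Equiv.ext fun ⟨i, k⟩ => Prod.ext (hfst i k) rfl⟩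

theorem sign_smul_prod_eq {F : ι × Fin 2 → ι × Fin 2 → A} (hskew : ∀ a c, F c a = -F a c)
    {π : Equiv.Perm (ι × Fin 2)} (hπ : ∀ i, (π (i, 0)).1 = (π (i, 1)).1) :
    Equiv.Perm.sign π • ∏ i, F (π (i, 0)) (π (i, 1)) = ∏ i, F (i, 0) (i, 1) := by
  obtain ⟨ρ, s, rfl⟩ := exists_eq_prodCongrLeft_mul_prodCongrRight hπ
  have hsign : Equiv.Perm.sign (Equiv.prodCongrLeft (fun _ : Fin 2 => ρ) * Equiv.prodCongrRight s) =
      ∏ i, Equiv.Perm.sign (s i) := by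
    simp [Equiv.Perm.sign_prodCongrLeft, Equiv.Perm.sign_prodCongrRight]
  have hswap : ∀ (τ : Equiv.Perm (Fin 2)) (i : ι),
      F (i, τ 0) (i, τ 1) = Equiv.Perm.sign τ • F (i, 0) (i, 1) := fun τ i => by
    obtain rfl | rfl : τ = 1 ∨ τ = Equiv.swap 0 1 := by
      revert τ
      decide
    · simp
    · simp [hskew (i, 0)]
  calc Equiv.Perm.sign (Equiv.prodCongrLeft (fun _ : Fin 2 => ρ) * Equiv.prodCongrRight s) •
        ∏ i, F (ρ i, s i 0) (ρ i, s i 1)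
      = ∏ i, Equiv.Perm.sign (s i) • Equiv.Perm.sign (s i) • F (ρ i, 0) (ρ i, 1) := by
        simp only [hsign, hswap, Finset.prod_smul]
    _ = ∏ i, F (ρ i, 0) (ρ i, 1) := by simp only [smul_smul, Int.units_mul_self, one_smul]
    _ = ∏ i, F (i, 0) (i, 1) := Equiv.prod_comp ρ fun i => F (i, 0) (i, 1)

theorem pfaffianForm_ne_zero [IsDomain A] [CharZero A] (hskew : ∀ u v, B v u = -B u v)
    {w : ι × Fin 2 → V} (hw : ∀ a c, a.1 ≠ c.1 → B (w a) (w c) = 0)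
    (hw_ne : ∀ i, B (w (i, 0)) (w (i, 1)) ≠ 0) : pfaffianForm B w ≠ 0 := by
  have hterm : ∀ π : Equiv.Perm (ι × Fin 2),
      Equiv.Perm.sign π • ∏ i, B (w (π (i, 0))) (w (π (i, 1))) =
        if ∀ i, (π (i, 0)).1 = (π (i, 1)).1 then ∏ i, B (w (i, 0)) (w (i, 1)) else 0 := fun π => by
    split_ifs with hπ
    · exact sign_smul_prod_eq (F := fun a c => B (w a) (w c)) (fun a c => hskew _ _) hπ
    · obtain ⟨i, hi⟩ := not_forall.mp hπ
      rw [Finset.prod_eq_zero (Finset.mem_univ i) (hw _ _ hi), smul_zero]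
  rw [pfaffianForm_apply, Finset.sum_congr rfl fun π _ => hterm π, ← Finset.sum_filter,
    Finset.sum_const, nsmul_eq_mul]
  refine mul_ne_zero (Nat.cast_ne_zero.mpr (Finset.card_ne_zero_of_mem (a := 1) ?_))
    (Finset.prod_ne_zero_iff.mpr fun i _ => hw_ne i)
  simp

end Pfaffian

section BracketForm

variable {K L σ : Type*} [Field K] [LieRing L] [LieAlgebra K L] [Fintype σ] (b : Basis σ K L)

/-- The bilinear form `(y, z) ↦ B([y, z], x)` for the Killing form `B`, as a form with values in the
polynomial functions of `x`. -/
noncomputable def bracketForm : L →ₗ[K] L →ₗ[K] MvPolynomial σ K :=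
  (LieAlgebra.ad K L : L →ₗ[K] L →ₗ[K] L).compr₂ (linForm b ∘ₗ killingForm K L)

theorem bracketForm_apply (y z : L) : bracketForm b y z = linForm b (killingForm K L ⁅y, z⁆) :=
  rfl

theorem eval_bracketForm (x y z : L) :
    eval (b.repr x) (bracketForm b y z) = killingForm K L ⁅y, z⁆ x :=
  eval_linForm b _ x

theorem bracketForm_skew (y z : L) : bracketForm b z y = -bracketForm b y z := by
  rw [bracketForm_apply, bracketForm_apply, ← lie_skew, map_neg, map_neg]

theorem bracketForm_isHomogeneous (y z : L) : (bracketForm b y z).IsHomogeneous 1 :=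
  linForm_isHomogeneous b _

variable {ι : Type*} [Fintype ι] [DecidableEq ι]

theorem eval_pfaffianForm_bracketForm (w : ι × Fin 2 → L) (x : L) :
    eval (b.repr x) (pfaffianForm (bracketForm b) w) =
      pfaffianForm ((bracketForm b).compr₂ (aeval (b.repr x)).toLinearMap) w := by
  rw [← map_pfaffianForm, aeval_eq_eval]

theorem pfaffianForm_bracketForm_eq_zero {P : MvPolynomial σ K} (hP : P ∈ invariants b) {x : L}
    {w : ι × Fin 2 → L} {k : ι × Fin 2} (hk : killingForm K L (w k) = differential b x P) :
    pfaffianForm ((bracketForm b).compr₂ (aeval (b.repr x)).toLinearMap) w = 0 := by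
  have hleft : ∀ y, eval (b.repr x) (bracketForm b (w k) y) = 0 := fun y => by
    rw [eval_bracketForm, LieModule.traceForm_apply_lie_apply, hk]
    exact eval_dirDerivation_lie_eq_zero hP x y
  refine pfaffianForm_eq_zero _ hleft fun y => ?_
  change eval (b.repr x) (bracketForm b y (w k)) = 0
  rw [bracketForm_skew, map_neg, hleft, neg_zero]

end BracketForm

section KillingJacobian

variable {K L σ ι κ : Type*} [Field K] [LieRing L] [LieAlgebra K L] [Fintype σ] (b : Basis σ K L)
  [Fintype ι] [Fintype κ] [DecidableEq ι] [DecidableEq κ] (d : Basis (ι ⊕ κ) K L)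

/-- The Jacobian determinant of the linear functions `B(w i, ·)`, for the Killing form `B`, followed
by the polynomial functions `p`. As a function of `w` it is the alternating form to be compared with
`pfaffianForm (bracketForm b)`. -/
noncomputable def killingJacobian (p : κ → MvPolynomial σ K) (w : ι → L) : MvPolynomial σ K :=
  jacobian b d (Sum.elim (fun i => linForm b (killingForm K L (w i))) p)

theorem eval_killingJacobian (p : κ → MvPolynomial σ K) (w : ι → L) (x : L) :
    eval (b.repr x) (killingJacobian b d p w) =
      d.dualBasis.det (Sum.elim (killingForm K L ∘ w) fun j => differential b x (p j)) := by
  rw [killingJacobian, eval_jacobian]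
  congr 1
  ext1 (i | j)
  · exact differential_linForm b x _
  · rfl

theorem exists_not_dvd_killingJacobian [CharZero K] [FiniteDimensional K L]
    [LieAlgebra.IsKilling K L] {p : κ → MvPolynomial σ K} (hp : AlgebraicIndependent K p)
    (hgen : Algebra.adjoin K (Set.range p) = invariants b) {f : MvPolynomial σ K} (hf : Prime f) :
    ∃ w : ι → L, ¬ f ∣ killingJacobian b d p w := by
  obtain ⟨ψ, hψ⟩ := exists_not_dvd_jacobian b d hp
    (fun _ _ hf hq => hgen ▸ mem_invariants_of_prime_mul_mem b hf hq) hf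
  let B := LinearMap.BilinForm.toDual _ (LieAlgebra.IsKilling.killingForm_nondegenerate K L)
  refine ⟨fun i => B.symm (ψ i), ?_⟩
  have hB : ∀ φ, killingForm K L (B.symm φ) = φ := B.apply_symm_apply
  simpa only [killingJacobian, hB] using hψ

end KillingJacobian

section Roots

theorem exists_injective_forall_ne_apply {α ι : Type*} [Fintype ι] {s : Finset α} {f : α → α}
    (hf : Function.Involutive f) (hfix : ∀ a ∈ s, f a ≠ a)
    (hcard : 2 * Fintype.card ι ≤ s.card) :
    ∃ g : ι → α, Function.Injective g ∧ (∀ i, g i ∈ s) ∧ ∀ i j, g i ≠ f (g j) := by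
  classical
  obtain ⟨t, ⟨hts, htf⟩, hmax⟩ := Set.Finite.exists_maximal
    (s := {t : Finset α | t ⊆ s ∧ ∀ a ∈ t, ∀ c ∈ t, a ≠ f c})
    (s.powerset.finite_toSet.subset fun t ht => Finset.mem_powerset.mpr ht.1) ⟨∅, by simp⟩
  have hcover : s ⊆ t ∪ t.image f := fun a ha => by
    by_contra hat
    rw [Finset.mem_union, Finset.mem_image, not_or] at hat
    have hins : ∀ c ∈ insert a t, ∀ d ∈ insert a t, c ≠ f d := by
      simp only [Finset.mem_insert]
      rintro c (rfl | hc) d (rfl | hd)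
      · exact (hfix _ ha).symm
      · exact fun h => hat.2 ⟨d, hd, h.symm⟩
      · exact fun h => hat.2 ⟨c, hc, h ▸ hf d⟩
      · exact htf c hc d hd
    exact hat.1 (hmax ⟨Finset.insert_subset ha hts, hins⟩ (Finset.subset_insert a t)
      (Finset.mem_insert_self a t))
  have hle : Fintype.card ι ≤ Fintype.card t := by
    have := (Finset.card_le_card hcover).trans (Finset.card_union_le _ _)
    have := Finset.card_image_le (s := t) (f := f)
    rw [Fintype.card_coe]
    lia
  obtain ⟨g⟩ := Function.Embedding.nonempty_of_card_le hle
  exact ⟨fun i => g i, Subtype.val_injective.comp g.injective, fun i => hts (g i).2,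
    fun i j => htf _ (g i).2 _ (g j).2⟩

open LieAlgebra LieAlgebra.IsKilling LieModule

variable {K L : Type*} [Field K] [CharZero K] [LieRing L] [LieAlgebra K L] [FiniteDimensional K L]
  [IsKilling K L] (H : LieSubalgebra K L) [H.IsCartanSubalgebra] [IsTriangularizable K H L]

theorem finrank_eq_finrank_cartan_add_card_root : finrank K L = finrank K H + H.root.card := by
  classical
  have hint : DirectSum.IsInternal fun χ : Weight K H L => (genWeightSpace L χ).toSubmodule :=
    DirectSum.isInternal_submodule_of_iSupIndep_of_iSup_eq_top
      (LieSubmodule.iSupIndep_toSubmodule.mpr (iSupIndep_genWeightSpace' K H L))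
      (by rw [← LieSubmodule.iSup_toSubmodule, iSup_genWeightSpace_eq_top',
        LieSubmodule.top_toSubmodule])
  have hsum : finrank K L = ∑ χ : Weight K H L, finrank K (genWeightSpace L χ) :=
    (LinearEquiv.ofBijective (DirectSum.coeLinearMap _) hint).finrank_eq.symm.trans
      (Module.finrank_directSum _ fun χ : Weight K H L => genWeightSpace L χ)
  have hroot : ∑ χ ∈ H.root, finrank K (genWeightSpace L χ) = H.root.card := by
    rw [Finset.card_eq_sum_ones]
    exact Finset.sum_congr rfl fun χ hχ =>
      finrank_rootSpace_eq_one χ (by simpa [LieSubalgebra.root] using hχ)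
  have hzero : ∑ χ ∈ H.rootᶜ, finrank K (genWeightSpace L χ) = finrank K H := by
    rcases subsingleton_or_nontrivial L with hL | hL
    · have hfinrank : ∀ N : LieSubmodule K H L, finrank K N = 0 := fun N =>
        finrank_zero_of_subsingleton
      simp only [hfinrank, Finset.sum_const_zero]
      exact finrank_zero_of_subsingleton.symm
    · have hcompl : H.rootᶜ = {(0 : Weight K H L)} := by
        ext χ
        simp [LieSubalgebra.root, Weight.isZero_iff_eq_zero]
      rw [hcompl, Finset.sum_singleton]
      exact congrArg (fun N : LieSubmodule K H L => finrank K N) (rootSpace_zero_eq K L H)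
  rw [hsum, ← Finset.sum_add_sum_compl H.root, hroot, hzero, add_comm]

theorem killingForm_lie_of_mem_rootSpace {χ : H → K} {y : L} (hy : y ∈ rootSpace H χ) (z : L)
    (h : H) : killingForm K L ⁅y, z⁆ h = χ h * killingForm K L y z := by
  have hlie : ⁅(h : L), y⁆ = χ h • y := lie_eq_smul_of_mem_rootSpace hy h
  rw [LieModule.traceForm_comm, ← LieModule.traceForm_apply_lie_apply, hlie, map_smul,
    LinearMap.smul_apply, smul_eq_mul]

theorem exists_mem_rootSpace_killingForm_ne_zero {α : Weight K H L} (hα : α.IsNonZero) :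
    ∃ y ∈ rootSpace H α, ∃ z ∈ rootSpace H (-α), killingForm K L y z ≠ 0 := by
  obtain ⟨t, y, z, ht, hy, hz⟩ := exists_isSl2Triple_of_weight_isNonZero hα
  refine ⟨y, hy, z, hz, fun h => ht.h_ne_zero ?_⟩
  rw [← ht.lie_e_f, lie_eq_killingForm_smul_of_mem_rootSpace_of_mem_rootSpace_neg hy hz, h,
    zero_smul]

theorem exists_pairwise_linearIndependent_weights {ι : Type*} [Fintype ι]
    (hcard : finrank K L = finrank K H + 2 * Fintype.card ι) :
    ∃ α : ι → Weight K H L, (∀ i, (α i).IsNonZero) ∧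
      Pairwise fun i j => LinearIndependent K ![(α i).toLinear, (α j).toLinear] := by
  have hroots := finrank_eq_finrank_cartan_add_card_root H
  have hroot : ∀ χ ∈ H.root, χ.IsNonZero := fun χ hχ => by simpa [LieSubalgebra.root] using hχ
  have hfix : ∀ χ ∈ H.root, -χ ≠ χ := fun χ hχ h => hroot χ hχ (neg_eq_self.mp
    ((Weight.coe_neg (α := χ)).symm.trans (congrArg DFunLike.coe h)))
  obtain ⟨α, hinj, hα, hneg⟩ := exists_injective_forall_ne_apply (ι := ι) neg_neg hfix (by lia)
  refine ⟨α, fun i => hroot _ (hα i), fun i j hij => (LinearIndependent.pair_iff' ?_).mpr ?_⟩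
  · exact fun h => hroot _ (hα i) (funext fun t => LinearMap.congr_fun h t)
  · intro k hk
    have hk' : (α j : H → K) = k • ⇑(α i) := funext fun t => (LinearMap.congr_fun hk t).symm
    rcases eq_neg_or_eq_of_eq_smul (α i) (α j) (hroot _ (hα j)) k hk' with h | h
    · exact hneg j i h
    · exact hij (hinj h).symm

/-- A family of root vectors for pairwise non-proportional roots `α i` of the Cartan subalgebra `H`,
one pair `w (i, 0) ∈ g_{α i}`, `w (i, 1) ∈ g_{-α i}` that is not Killing-orthogonal for each
index `i`. -/
structure IsRootVectorFamily {ι : Type*} (α : ι → Weight K H L) (w : ι × Fin 2 → L) : Prop where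
  linearIndependent : Pairwise fun i j => LinearIndependent K ![(α i).toLinear, (α j).toLinear]
  isNonZero (i : ι) : (α i).IsNonZero
  mem_rootSpace (i : ι) : w (i, 0) ∈ rootSpace H (α i)
  mem_rootSpace_neg (i : ι) : w (i, 1) ∈ rootSpace H (-α i)
  killingForm_ne_zero (i : ι) : killingForm K L (w (i, 0)) (w (i, 1)) ≠ 0

namespace IsRootVectorFamily

variable {H} {ι : Type*} {α : ι → Weight K H L} {w : ι × Fin 2 → L}

theorem exists_of_finrank_eq [Fintype ι]
    (hcard : finrank K L = finrank K H + 2 * Fintype.card ι) :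
    ∃ (α : ι → Weight K H L) (w : ι × Fin 2 → L), IsRootVectorFamily H α w := by
  obtain ⟨α, hα, hli⟩ := exists_pairwise_linearIndependent_weights H hcard
  choose y hy z hz hyz using fun i => exists_mem_rootSpace_killingForm_ne_zero H (hα i)
  exact ⟨α, fun a => ![y a.1, z a.1] a.2, hli, hα, hy, hz, hyz⟩

omit [IsKilling K L] [IsTriangularizable K H L] in
theorem exists_mem_rootSpace (hw : IsRootVectorFamily H α w) :
    ∀ a : ι × Fin 2, ∃ ε : K, ε ≠ 0 ∧ w a ∈ rootSpace H (ε • ⇑(α a.1))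
  | (i, 0) => ⟨1, one_ne_zero, by simpa using hw.mem_rootSpace i⟩
  | (i, 1) => ⟨-1, neg_ne_zero.mpr one_ne_zero, by simpa using hw.mem_rootSpace_neg i⟩

omit [IsKilling K L] in
theorem killingForm_eq_zero (hw : IsRootVectorFamily H α w) {a c : ι × Fin 2} (hac : a.1 ≠ c.1) :
    killingForm K L (w a) (w c) = 0 := by
  obtain ⟨ε, hε, ha⟩ := hw.exists_mem_rootSpace a
  obtain ⟨δ, -, hc⟩ := hw.exists_mem_rootSpace c
  refine killingForm_apply_eq_zero_of_mem_rootSpace_of_add_ne_zero K L H ha hc fun h => hε ?_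
  have hpair := LinearIndependent.pair_iff.mp (hw.linearIndependent hac)
  exact (hpair ε δ (LinearMap.ext fun t => congrFun h t)).1

omit [IsKilling K L] in
theorem killingForm_apply_coe_eq_zero (hw : IsRootVectorFamily H α w) (a : ι × Fin 2) (h : H) :
    killingForm K L (w a) h = 0 := by
  obtain ⟨ε, hε, ha⟩ := hw.exists_mem_rootSpace a
  have hh : (h : L) ∈ rootSpace H (0 : H → K) := by
    rw [rootSpace_zero_eq]
    exact h.2
  refine killingForm_apply_eq_zero_of_mem_rootSpace_of_add_ne_zero K L H ha hh ?_
  rw [add_zero]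
  exact smul_ne_zero hε (hw.isNonZero a.1)

omit [IsKilling K L] [IsTriangularizable K H L] in
theorem lie_mem (hw : IsRootVectorFamily H α w) (i : ι) : ⁅w (i, 0), w (i, 1)⁆ ∈ H := by
  have h : ⁅w (i, 0), w (i, 1)⁆ ∈ rootSpace H (α i + -α i : H → K) :=
    lie_mem_genWeightSpace_of_mem_genWeightSpace (hw.mem_rootSpace i) (hw.mem_rootSpace_neg i)
  rwa [add_neg_cancel, rootSpace_zero_eq] at h

theorem killingForm_lie_ne_zero (hw : IsRootVectorFamily H α w) {i : ι} {h : H} (hi : α i h ≠ 0) :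
    killingForm K L ⁅w (i, 0), w (i, 1)⁆ h ≠ 0 := by
  rw [killingForm_lie_of_mem_rootSpace H (hw.mem_rootSpace i)]
  exact mul_ne_zero hi (hw.killingForm_ne_zero i)

theorem killingForm_lie_eq_zero (hw : IsRootVectorFamily H α w) {a c : ι × Fin 2}
    (hac : a.1 ≠ c.1) (h : H) : killingForm K L ⁅w a, w c⁆ h = 0 := by
  obtain ⟨ε, -, ha⟩ := hw.exists_mem_rootSpace a
  rw [killingForm_lie_of_mem_rootSpace H ha, hw.killingForm_eq_zero hac, mul_zero]

theorem lie_ne_zero (hw : IsRootVectorFamily H α w) (i : ι) : ⁅w (i, 0), w (i, 1)⁆ ≠ 0 := by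
  obtain ⟨h, hi⟩ := Function.ne_iff.mp (hw.isNonZero i)
  exact fun hlie => hw.killingForm_lie_ne_zero hi (by rw [hlie, map_zero, LinearMap.zero_apply])

theorem lie_eq_zero (hw : IsRootVectorFamily H α w) {i : ι} {h : H} (hi : α i h = 0) :
    ⁅w (i, 0), (h : L)⁆ = 0 := by
  rw [← lie_skew, ← LieSubalgebra.coe_bracket_of_module,
    lie_eq_smul_of_mem_rootSpace (hw.mem_rootSpace i) h, hi, zero_smul, neg_zero]

variable {σ κ : Type*} [Fintype σ] (b : Basis σ K L)

theorem eval_pfaffianForm_ne_zero [Fintype ι] [DecidableEq ι] (hw : IsRootVectorFamily H α w)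
    {h : H} (hh : ∀ i, α i h ≠ 0) :
    eval (b.repr (h : L)) (pfaffianForm (bracketForm b) w) ≠ 0 := by
  rw [eval_pfaffianForm_bracketForm]
  refine pfaffianForm_ne_zero _ (fun y z => ?_) (fun a c hac => ?_) fun i => ?_
  · change eval _ (bracketForm b z y) = -eval _ (bracketForm b y z)
    rw [bracketForm_skew, map_neg]
  · exact (eval_bracketForm b _ _ _).trans (hw.killingForm_lie_eq_zero hac h)
  · exact (eval_bracketForm b _ _ _).trans_ne (hw.killingForm_lie_ne_zero (hh i))

theorem eval_killingJacobian_eq_zero [Fintype ι] [Fintype κ] [DecidableEq ι] [DecidableEq κ]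
    (hw : IsRootVectorFamily H α w) (d : Basis (ι × Fin 2 ⊕ κ) K L)
    {p : κ → MvPolynomial σ K} (hp : ∀ j, p j ∈ invariants b) {i : ι} {h : H} (hi : α i h = 0) :
    eval (b.repr (h : L)) (killingJacobian b d p w) = 0 := by
  refine eval_jacobian_eq_zero b d (hw.lie_ne_zero i) ?_
  rintro (a | j)
  · rw [Sum.elim_inl, differential_linForm]
    exact hw.killingForm_apply_coe_eq_zero a ⟨_, hw.lie_mem i⟩
  · exact eval_dirDerivation_lie_eq_zero_of_lie_eq_zero (hp j) (hw.lie_eq_zero hi) _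

end IsRootVectorFamily

end Roots

section Degree

variable {K V W σ τ : Type*} [Field K] [AddCommGroup V] [Module K V] [AddCommGroup W] [Module K W]

theorem card_le_totalDegree_of_eval_add_smul [Fintype τ] {P : MvPolynomial σ K} {a v : σ → K}
    (ha : eval a P ≠ 0) {t : τ → K} (ht : Function.Injective t)
    (h : ∀ i, eval (a + t i • v) P = 0) : Fintype.card τ ≤ P.totalDegree := by
  let R := aeval (fun k => Polynomial.C (a k) + Polynomial.C (v k) * Polynomial.X) P
  have hR : ∀ s, R.eval s = eval (a + s • v) P := fun s => by
    have hcomp : (Polynomial.aeval s).comp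
        (aeval fun k => Polynomial.C (a k) + Polynomial.C (v k) * Polynomial.X) =
        aeval (a + s • v) :=
      algHom_ext fun k => by
        rw [AlgHom.comp_apply, aeval_X, aeval_X, Polynomial.coe_aeval_eq_eval, Polynomial.eval_add,
          Polynomial.eval_mul, Polynomial.eval_C, Polynomial.eval_C, Polynomial.eval_X, mul_comm,
          Pi.add_apply, Pi.smul_apply, smul_eq_mul]
    exact congrArg (fun φ : MvPolynomial σ K →ₐ[K] K => φ P) hcomp
  have hdeg : R.natDegree ≤ P.totalDegree := by
    refine (aeval_natDegree_le P le_rfl _ fun k => ?_).trans_eq (mul_one _)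
    rw [add_comm]
    exact Polynomial.natDegree_linear_le
  have hR_ne : R ≠ 0 := fun h0 => ha (by simpa [h0] using (hR 0).symm)
  have hroots := Polynomial.card_le_degree_of_subset_roots (p := R)
    (Z := Finset.univ.map ⟨t, ht⟩) fun s hs => by
      obtain ⟨i, -, rfl⟩ := Finset.mem_map.mp (Finset.mem_val.mp hs)
      exact (Polynomial.mem_roots hR_ne).mpr ((hR _).trans (h i))
  simpa using hroots.trans hdeg

theorem exists_injective_div [Infinite K] [Finite τ] {α : τ → Dual K W}
    (hα : Pairwise fun i j => LinearIndependent K ![α i, α j]) {x : W} (hx : ∀ i, α i x ≠ 0) :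
    ∃ v, (∀ i, α i v ≠ 0) ∧ Function.Injective fun i => α i x / α i v := by
  obtain ⟨v, hv⟩ := Module.Dual.exists_forall_ne_zero_of_forall_exists
    (Sum.elim α fun q : {q : τ × τ // q.1 ≠ q.2} =>
      α q.1.2 x • α q.1.1 - α q.1.1 x • α q.1.2) <| by
    rintro (i | ⟨⟨i, j⟩, hij⟩)
    · exact ⟨x, hx i⟩
    · by_contra! h
      have hsum : α j x • α i + -α i x • α j = 0 :=
        LinearMap.ext fun t => by simpa [sub_eq_add_neg] using h t
      exact hx j (LinearIndependent.pair_iff.mp (hα hij) _ _ hsum).1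
  have hαv : ∀ i, α i v ≠ 0 := fun i => hv (Sum.inl i)
  refine ⟨v, hαv, fun i j hij => by_contra fun hne => hv (Sum.inr ⟨(i, j), hne⟩) ?_⟩
  have hcross := (div_eq_div_iff (hαv i) (hαv j)).mp hij
  change α j x * α i v - α i x * α j v = 0
  rw [hcross, sub_self]

theorem card_le_totalDegree_of_forall_eval_eq_zero [Infinite K] [Fintype τ] (b : Basis σ K V)
    (f : W →ₗ[K] V) {α : τ → Dual K W}
    (hα : Pairwise fun i j => LinearIndependent K ![α i, α j]) {P : MvPolynomial σ K}
    (hP : ∀ i x, α i x = 0 → eval (b.repr (f x)) P = 0) {x : W}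
    (hx : eval (b.repr (f x)) P ≠ 0) : Fintype.card τ ≤ P.totalDegree := by
  obtain ⟨v, hv, hinj⟩ := exists_injective_div hα fun i hi => hx (hP i x hi)
  refine card_le_totalDegree_of_eval_add_smul hx (neg_injective.comp hinj) (v := b.repr (f v))
    fun i => ?_
  have hzero : α i (x + (-(α i x / α i v)) • v) = 0 := by
    rw [map_add, map_smul, smul_eq_mul, neg_mul, div_mul_cancel₀ _ (hv i), add_neg_cancel]
  simpa using hP i _ hzero

end Degree

section Conclusion

theorem exists_forall_eq_mul_of_mul_eq_mul {R α : Type*} [CommRing R] [IsDomain R]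
    [UniqueFactorizationMonoid R] {F G : α → R} (hFG : ∀ z w, F z * G w = F w * G z)
    (hF : ∀ f, Prime f → ∃ w, ¬ f ∣ F w) (hne : ∃ w, F w ≠ 0) : ∃ c, ∀ w, G w = c * F w := by
  obtain ⟨z, hz⟩ := hne
  obtain ⟨a, c, d, hac, ha, hc⟩ := UniqueFactorizationMonoid.exists_reduced_factors _ hz (G z)
  have hd : d ≠ 0 := left_ne_zero_of_mul (ha ▸ hz)
  have ha_ne : a ≠ 0 := right_ne_zero_of_mul (ha ▸ hz)
  have hmul : ∀ w, a * G w = c * F w := fun w => mul_left_cancel₀ hd <| by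
    rw [← mul_assoc, ha, hFG, ← hc]
    ring
  have ha_dvd : ∀ w, a ∣ F w := fun w => hac.dvd_of_dvd_mul_left (Dvd.intro _ (hmul w))
  have ha_unit : IsUnit a := by
    by_contra h
    obtain ⟨f, hf, hfa⟩ := WfDvdMonoid.exists_irreducible_factor h ha_ne
    obtain ⟨w, hw⟩ := hF f hf.prime
    exact hw (hfa.trans (ha_dvd w))
  obtain ⟨a', ha'⟩ := ha_unit.exists_left_inv
  exact ⟨a' * c, fun w => by rw [mul_assoc, ← hmul, ← mul_assoc, ha', one_mul]⟩

variable {K L σ ι κ : Type*} [Field K] [CharZero K] [LieRing L] [LieAlgebra K L]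
  [FiniteDimensional K L] [LieAlgebra.IsKilling K L] [Fintype σ] [Fintype ι] [Fintype κ]
  [DecidableEq ι] [DecidableEq κ] (b : Basis σ K L) (d : Basis (ι × Fin 2 ⊕ κ) K L)
  {p : κ → MvPolynomial σ K}

-- At every point `x` both sides, as alternating forms on the dual space of `L`, vanish as soon as
-- one of the arguments is the differential of some `p j`.
theorem killingJacobian_mul_pfaffianForm (hp : ∀ j, p j ∈ invariants b) (z w : ι × Fin 2 → L) :
    killingJacobian b d p z * pfaffianForm (bracketForm b) w =
      killingJacobian b d p w * pfaffianForm (bracketForm b) z := by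
  refine eq_of_forall_eval_repr_eq b fun x => ?_
  let B := LinearMap.BilinForm.toDual _ (LieAlgebra.IsKilling.killingForm_nondegenerate K L)
  let g := (pfaffianForm (ι := ι) ((bracketForm b).compr₂
    (aeval (b.repr x)).toLinearMap)).compLinearMap B.symm.toLinearMap
  have hg : ∀ a i j, a i = differential b x (p j) → g a = 0 := fun a i j h =>
    pfaffianForm_bracketForm_eq_zero b (hp j) ((B.apply_symm_apply (a i)).trans h)
  have hg_apply : ∀ y : ι × Fin 2 → L, g (killingForm K L ∘ y) =
      pfaffianForm ((bracketForm b).compr₂ (aeval (b.repr x)).toLinearMap) y := fun y =>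
    congrArg _ (funext fun a => B.symm_apply_apply (y a))
  rw [map_mul, map_mul, eval_killingJacobian, eval_killingJacobian, eval_pfaffianForm_bracketForm,
    eval_pfaffianForm_bracketForm, ← hg_apply, ← hg_apply]
  exact det_sumElim_mul_eq d.dualBasis _ hg _ _

theorem exists_forall_pfaffianForm_eq_mul_killingJacobian (hp : AlgebraicIndependent K p)
    (hgen : Algebra.adjoin K (Set.range p) = invariants b) :
    ∃ c, ∀ w, pfaffianForm (bracketForm b) w = c * killingJacobian b d p w := by
  refine exists_forall_eq_mul_of_mul_eq_mul
    (killingJacobian_mul_pfaffianForm b d fun j => hgen ▸ Algebra.subset_adjoin ⟨j, rfl⟩)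
    (fun f hf => exists_not_dvd_killingJacobian b d hp hgen hf) ?_
  rcases isEmpty_or_nonempty σ with hσ | ⟨⟨i⟩⟩
  · have : IsEmpty (ι × Fin 2 ⊕ κ) := (d.indexEquiv b).isEmpty
    exact ⟨0, by simp [killingJacobian, jacobian]⟩
  · obtain ⟨w, hw⟩ := exists_not_dvd_killingJacobian b d hp hgen (X_prime (i := i))
    exact ⟨w, fun h => hw (h ▸ dvd_zero _)⟩

theorem exists_forall_pfaffianForm_eq_C_mul_killingJacobian (H : LieSubalgebra K L)
    [H.IsCartanSubalgebra] [LieModule.IsTriangularizable K H L]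
    (hcard : finrank K L = finrank K H + 2 * Fintype.card ι) (hp : AlgebraicIndependent K p)
    (hgen : Algebra.adjoin K (Set.range p) = invariants b) :
    ∃ c ≠ 0, ∀ w, pfaffianForm (bracketForm b) w = C c * killingJacobian b d p w := by
  obtain ⟨q, hq⟩ := exists_forall_pfaffianForm_eq_mul_killingJacobian b d hp hgen
  obtain ⟨α, w, hw⟩ := IsRootVectorFamily.exists_of_finrank_eq hcard
  obtain ⟨h, hh⟩ := Dual.exists_forall_ne_zero_of_forall_exists (fun i => (α i).toLinear)
    fun i => Function.ne_iff.mp (hw.isNonZero i)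
  have heval : eval (b.repr (h : L)) q * eval (b.repr (h : L)) (killingJacobian b d p w) ≠ 0 := by
    rw [← map_mul, ← hq]
    exact hw.eval_pfaffianForm_ne_zero b hh
  have hJ_degree : Fintype.card ι ≤ (killingJacobian b d p w).totalDegree :=
    card_le_totalDegree_of_forall_eval_eq_zero b H.subtype hw.linearIndependent
      (fun i y hy => hw.eval_killingJacobian_eq_zero b d
        (fun j => hgen ▸ Algebra.subset_adjoin ⟨j, rfl⟩) hy) (right_ne_zero_of_mul heval)
  have hq_ne : q ≠ 0 := fun h0 => left_ne_zero_of_mul heval (by rw [h0, map_zero])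
  have hJ_ne : killingJacobian b d p w ≠ 0 := fun h0 =>
    right_ne_zero_of_mul heval (by rw [h0, map_zero])
  have hdegree : (q * killingJacobian b d p w).totalDegree = Fintype.card ι := by
    rw [← hq]
    exact (pfaffianForm_isHomogeneous (bracketForm_isHomogeneous b) w).totalDegree
      (hq w ▸ mul_ne_zero hq_ne hJ_ne)
  rw [totalDegree_mul_of_isDomain hq_ne hJ_ne] at hdegree
  have hqC := totalDegree_eq_zero_iff_eq_C.mp (show q.totalDegree = 0 by lia)
  refine ⟨coeff 0 q, fun h0 => hq_ne ?_, fun w => hqC ▸ hq w⟩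
  rw [hqC, h0, C_0]

end Conclusion

section GammaVal

variable {L : Type*} [LieRing L] [LieAlgebra ℂ L] {n : ℕ} (b : Basis (Fin n) ℂ L)

theorem dirDeriv_eq_dirDerivation (u : L) (P : MvPolynomial (Fin n) ℂ) :
    dirDeriv b u P = dirDerivation b u P :=
  (dirDerivation_apply b u P).symm

theorem isInvariantPoly_iff_mem_invariants {P : MvPolynomial (Fin n) ℂ} :
    IsInvariantPoly b P ↔ P ∈ invariants b := by
  simp only [IsInvariantPoly, dirDeriv_eq_dirDerivation, mem_invariants]
  refine ⟨fun h y => eq_of_forall_eval_repr_eq b fun x => ?_, fun h x y => ?_⟩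
  · rw [eval_linDerivation, map_zero]
    exact h x y
  · exact eval_dirDerivation_lie_eq_zero h x y

theorem adjoin_range_eq_invariants {κ : Type*} {p : κ → MvPolynomial (Fin n) ℂ}
    (hinv : ∀ j, IsInvariantPoly b (p j))
    (hgen : ∀ P, IsInvariantPoly b P → P ∈ Algebra.adjoin ℂ (Set.range p)) :
    Algebra.adjoin ℂ (Set.range p) = invariants b := by
  simp only [isInvariantPoly_iff_mem_invariants] at hinv hgen
  exact le_antisymm (Algebra.adjoin_le (Set.range_subset_iff.mpr hinv)) hgen

/-- The equivalence sending `(i, 0)` to `2 i` and `(i, 1)` to `2 i + 1`. -/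
def pairEquiv (r : ℕ) : Fin r × Fin 2 ≃ Fin (2 * r) :=
  finProdFinEquiv.trans (finCongr (mul_comm r 2))

variable [FiniteDimensional ℂ L] {r : ℕ} {w : Fin (2 * r) → L}

theorem gammaVal_eq_eval_pfaffianForm (x : L) :
    GammaVal r w x = 1 / (r.factorial * 2 ^ r) *
      eval (b.repr x) (pfaffianForm (bracketForm b) (w ∘ pairEquiv r)) := by
  have hfst : ∀ i : Fin r, (⟨2 * i.1, by lia⟩ : Fin (2 * r)) = pairEquiv r (i, 0) := fun i =>
    Fin.ext (by simp [pairEquiv])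
  have hsnd : ∀ i : Fin r, (⟨2 * i.1 + 1, by lia⟩ : Fin (2 * r)) = pairEquiv r (i, 1) := fun i =>
    Fin.ext (by simp [pairEquiv, add_comm])
  rw [GammaVal, pfaffianForm_apply, map_sum, ← Equiv.sum_comp (pairEquiv r).permCongr]
  congr 1
  refine Finset.sum_congr rfl fun π _ => ?_
  simp only [hfst, hsnd, Equiv.Perm.sign_permCongr, Equiv.permCongr_apply,
    Equiv.symm_apply_apply, Units.smul_def, zsmul_eq_mul, map_mul, map_intCast, map_prod,
    eval_bracketForm, Function.comp_apply]

theorem exists_gammaVal_eq_mul_eval {Q : MvPolynomial (Fin n) ℂ}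
    (h : ∃ c ≠ 0, pfaffianForm (bracketForm b) (w ∘ pairEquiv r) = C c * Q) :
    ∃ c ≠ 0, ∀ x, GammaVal r w x = c * eval (b.repr x) Q := by
  obtain ⟨c, hc, h⟩ := h
  refine ⟨1 / (r.factorial * 2 ^ r) * c, mul_ne_zero (by simp [Nat.factorial_ne_zero]) hc,
    fun x => ?_⟩
  rw [gammaVal_eq_eval_pfaffianForm b, h, map_mul, eval_C, mul_assoc]

end GammaVal

end KostantPfaffian

open KostantPfaffian in
theorem stmt19_general {K L σ ι κ : Type*} [Field K] [CharZero K] [LieRing L] [LieAlgebra K L]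
    [FiniteDimensional K L] [LieAlgebra.IsKilling K L] [Fintype σ] [Fintype ι] [Fintype κ]
    [DecidableEq ι] [DecidableEq κ] (H : LieSubalgebra K L) [H.IsCartanSubalgebra]
    [LieModule.IsTriangularizable K H L] (hκ : Fintype.card κ = finrank K H)
    (hι : finrank K L = finrank K H + 2 * Fintype.card ι) (b : Basis σ K L)
    {p : κ → MvPolynomial σ K} (hp : AlgebraicIndependent K p)
    (hgen : Algebra.adjoin K (Set.range p) = invariants b)
    {w : ι × Fin 2 → L} (hw : LinearIndependent K w) {u : κ → L} (hu : LinearIndependent K u)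
    (huw : ∀ i j, killingForm K L (u i) (w j) = 0) :
    ∃ c ≠ 0, pfaffianForm (bracketForm b) w =
      C c * (Matrix.of fun i j => dirDerivation b (u i) (p j)).det := by
  have hcard : finrank K L = Fintype.card (ι × Fin 2) + Fintype.card κ := by
    rw [hι, hκ, Fintype.card_prod, Fintype.card_fin, mul_comm, add_comm]
  obtain ⟨v, hv⟩ := exists_linearIndependent_sumElim_basis (ι := ι × Fin 2) b hu hcard
  let d := basisOfLinearIndependentOfCardEqFinrank' _ hv (by rw [Fintype.card_sum, hcard])
  have hd : ∀ j, d (Sum.inr j) = u j := fun j => congrFun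
    (coe_basisOfLinearIndependentOfCardEqFinrank' _ hv _) (Sum.inr j)
  have hwd : ∀ i j, killingForm K L (w i) (d (Sum.inr j)) = 0 := fun i j => by
    rw [hd, LieModule.traceForm_comm, huw]
  have hψ := hw.map' (killingForm K L) (LieAlgebra.IsKilling.ker_killingForm_eq_bot K L)
  obtain ⟨c, hc, h⟩ := exists_forall_pfaffianForm_eq_C_mul_killingJacobian b d H hι hp hgen
  refine ⟨_, mul_ne_zero hc (det_dual_apply_ne_zero d hψ hwd), ?_⟩
  rw [h, killingJacobian, jacobian_sumElim_linForm b d p hwd, ← mul_assoc, ← C_mul]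
  simp only [hd, Function.comp_apply]

/-- Let `w₁, …, w_{2r} ∈ g` be linearly independent with span `S`, and let
`u₁, …, u_ℓ` be a basis of the Killing-orthogonal complement `S^⊥`.  Then there is a
nonzero constant `κ₁` such that
`∑_{ν ∈ Π_r} B([w_{ν(1)}, w_{ν(2)}], x) ⋯ B([w_{ν(2r-1)}, w_{ν(2r)}], x)
  = κ₁ · det (∂_{u i} p j) (x)`
for all `x ∈ g`, where `p₁, …, p_ℓ` are homogeneous generators of the invariant
ring `S(g)^G`. -/
theorem stmt19 (L : Type*) [LieRing L] [LieAlgebra ℂ L] [FiniteDimensional ℂ L]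
    [LieAlgebra.IsSemisimple ℂ L]
    (H : LieSubalgebra ℂ L) [H.IsCartanSubalgebra]
    (n r : ℕ) (hn : finrank ℂ L = n) (hnr : n = finrank ℂ H + 2 * r)
    (b : Basis (Fin n) ℂ L)
    (m : Fin (finrank ℂ H) → ℕ) (p : Fin (finrank ℂ H) → MvPolynomial (Fin n) ℂ)
    (hhom : ∀ j, (p j).IsHomogeneous (m j + 1))
    (hinv : ∀ j, IsInvariantPoly b (p j))
    (hindep : AlgebraicIndependent ℂ p)
    (hgen : ∀ P : MvPolynomial (Fin n) ℂ, IsInvariantPoly b P →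
      P ∈ Algebra.adjoin ℂ (Set.range p))
    (w : Fin (2 * r) → L) (hw : LinearIndependent ℂ w)
    (u : Fin (finrank ℂ H) → L) (hu : LinearIndependent ℂ u)
    (huw : ∀ i j, killingForm ℂ L (u i) (w j) = 0) :
    ∃ κ₁ : ℂ, κ₁ ≠ 0 ∧ ∀ x : L,
      GammaVal r w x =
        κ₁ * MvPolynomial.eval (fun i => b.repr x i)
          ((Matrix.of fun i j => dirDeriv b (u i) (p j)).det) := by
  simpa only [KostantPfaffian.dirDeriv_eq_dirDerivation] using
    KostantPfaffian.exists_gammaVal_eq_mul_eval b <| stmt19_general H (Fintype.card_fin _)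
      (by rw [hn, hnr, Fintype.card_fin]) b hindep
      (KostantPfaffian.adjoin_range_eq_invariants b hinv hgen)
      (hw.comp _ (KostantPfaffian.pairEquiv r).injective) hu fun i j => huw i _
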